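/- Let f ∈ ℂ[x_0,x_1,x_2,x_3]_3 be a homogeneous cubic such that the surface V(f) ⊂ ℙ^3 is smooth. Then the Milnor algebra M(f) = R/J(f) has the Strong Lefschetz Property. -/

import Mathlib

/-!
Let `J = (q₀, …, q₃)` be the Jacobian ideal of a smooth cubic surface; the `q_j` are quadrics without
a common zero outside the origin.

*Duality.* `R / J` carries a functional `Λ`, concentrated in degree `4`, whose pairing
`(g, h) ↦ Λ(g h)` is perfect (`exists_dual_socle_generator`). It comes from comparing `J` with an
ideal generated by powers of the variables, through the inclusion `(y) : det M ⊆ (q)` for a regular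
sequence `y = M q` (`mem_of_det_mul_mem`). The same comparison shows that the coefficients of a
syzygy of the `q_j` lie in `J` (`syzygy_mem`).

*Reduction to a Hessian.* For the linear form `ℓ_a` with coefficient vector `a`, the strong Lefschetz
property follows once `Λ(ℓ_a⁴) ≠ 0` and the bilinear form `(u, v) ↦ Λ(ℓ_a² u v)` on linear forms is
nondegenerate. Such `a` exists if the quartic `a ↦ Λ(ℓ_a⁴)` and the determinant of its Hessian are
nonzero polynomials. The quartic is nonzero by polarization, since `Λ ≠ 0`.

*The Hessian does not vanish.* Suppose `ψ` is a polynomial vector field in the kernel of the Hessian.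
Gordan–Noether identities for `ψ`, combined with an argument on dimensions special to four variables
(`polar_eq_zero`), show that either the quartic is a cone, or that there are independent linear
forms `α`, `γ` with `α²` and `α γ` in `J` (`IsConstQuartic.kernel_dichotomy`). In the first case `J`
contains a nonzero linear form. In the second, `γ · α² = α · αγ` gives a linear syzygy of the `q_j`;
its coefficients lie in `J`, hence vanish, which forces `α² = 0`. Both are impossible
(`genericHessian_det_ne_zero`).
-/

open MvPolynomial Module

/-- The Jacobian ideal `J(f)`, generated by the first order partial derivatives of `f`. -/
noncomputable def jacobianIdeal {N : ℕ} (f : MvPolynomial (Fin N) ℂ) :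
    Ideal (MvPolynomial (Fin N) ℂ) :=
  Ideal.span (Set.range fun i => pderiv i f)

/-- The degree-`m` graded piece of the quotient `R ⧸ I`, namely the image of the
space of homogeneous polynomials of degree `m`. -/
noncomputable def gradedPiece {N : ℕ} (I : Ideal (MvPolynomial (Fin N) ℂ)) (m : ℕ) :
    Submodule ℂ (MvPolynomial (Fin N) ℂ ⧸ I) :=
  Submodule.map (Ideal.Quotient.mkₐ ℂ I).toLinearMap (homogeneousSubmodule (Fin N) ℂ m)

/-- The Strong Lefschetz Property for the graded quotient algebra `R ⧸ I` with top
(socle) degree `T`: there is a linear form `ℓ` such that for all `i, k` with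
`i + k ≤ T`, multiplication by `ℓ^k` from the degree-`i` piece to the degree-`(i+k)`
piece is injective or surjective. -/
def hasSLPQuot {N : ℕ} (I : Ideal (MvPolynomial (Fin N) ℂ)) (T : ℕ) : Prop :=
  ∃ ℓ ∈ homogeneousSubmodule (Fin N) ℂ 1,
    ∀ i k : ℕ, i + k ≤ T →
      (∀ v ∈ gradedPiece I i, (Ideal.Quotient.mk I ℓ) ^ k * v = 0 → v = 0) ∨
      (∀ w ∈ gradedPiece I (i + k), ∃ v ∈ gradedPiece I i,
        (Ideal.Quotient.mk I ℓ) ^ k * v = w)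

universe u

/-! ### Regular sequences inside an ideal with the same number of generators -/

section Residual
open Polynomial

/-- A nonzerodivisor modulo `I` stays a nonzerodivisor modulo `I R[t]`. -/
theorem mul_mem_map_C_of_regular {R : Type u} [CommRing R] {I : Ideal R} {a : R}
    (ha : ∀ g, a * g ∈ I → g ∈ I) {w : R[X]}
    (hw : Polynomial.C a * w ∈ I.map (Polynomial.C : R →+* R[X])) :
    w ∈ I.map (Polynomial.C : R →+* R[X]) := by
  rw [Ideal.mem_map_C_iff] at hw ⊢
  intro n
  exact ha _ (by simpa [Polynomial.coeff_C_mul] using hw n)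

/-- If no element outside `I` is multiplied into `I` by all the `q j`, then the generic
combination `∑ t ^ j q_j` is a nonzerodivisor modulo `I R[t]`, by McCoy's theorem. -/
theorem generic_combination_regular {R : Type u} [CommRing R] {n : ℕ} {I : Ideal R}
    (q : Fin n → R) (hq : ∀ c, (∀ j, q j * c ∈ I) → c ∈ I) {w : R[X]}
    (hw : (∑ j : Fin n, (Polynomial.X : R[X]) ^ (j : ℕ) * Polynomial.C (q j)) * w ∈
      I.map (Polynomial.C : R →+* R[X])) :
    w ∈ I.map (Polynomial.C : R →+* R[X]) := by
  set z : R[X] := ∑ j : Fin n, (Polynomial.X : R[X]) ^ (j : ℕ) * Polynomial.C (q j) with hz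
  have key : ∀ p : R[X], p ∈ I.map (Polynomial.C : R →+* R[X]) ↔
      p.map (Ideal.Quotient.mk I) = 0 := by
    intro p
    rw [Ideal.mem_map_C_iff, Polynomial.ext_iff]
    simp [Polynomial.coeff_map, Ideal.Quotient.eq_zero_iff_mem]
  rw [key] at hw ⊢
  have hz0 : z.map (Ideal.Quotient.mk I) ∈ nonZeroDivisors (R ⧸ I)[X] := by
    rw [Polynomial.mem_nonZeroDivisors_iff]
    intro a ha
    obtain ⟨c, rfl⟩ := Ideal.Quotient.mk_surjective a
    rw [Ideal.Quotient.eq_zero_iff_mem]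
    refine hq c fun j => ?_
    have h1 := congrArg (fun p => p.coeff (j : ℕ)) ha
    have h2 : z.coeff (j : ℕ) = q j := by
      rw [hz, Polynomial.finsetSum_coeff, Finset.sum_eq_single j]
      · simp
      · intro b _ hb
        rw [Polynomial.coeff_X_pow_mul', Polynomial.coeff_C]
        have : (b : ℕ) ≠ j := fun h => hb (Fin.ext h)
        split_ifs <;> first | rfl | omega
      · simp
    simp only [Polynomial.coeff_smul, Polynomial.coeff_map, h2, Polynomial.coeff_zero,
      smul_eq_mul, ← map_mul] at h1
    rw [Ideal.Quotient.eq_zero_iff_mem] at h1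
    rwa [mul_comm]
  rw [Polynomial.map_mul, mul_comm] at hw
  exact (mem_nonZeroDivisors_iff_right.mp hz0) _ hw

/-- Cramer's rule modulo `I`: if `N q ≡ 0` then `det N` multiplies every `q j` into `I`. -/
theorem det_mul_mem_of_mulVec {R : Type u} [CommRing R] {n : ℕ} {I : Ideal R}
    (N : Matrix (Fin n) (Fin n) R) (q : Fin n → R) (h : ∀ i, ∑ j, N i j * q j ∈ I) (j : Fin n) :
    N.det * q j ∈ I := by
  have h1 : N.adjugate.mulVec (N.mulVec q) = N.det • q := by
    rw [Matrix.mulVec_mulVec, Matrix.adjugate_mul, Matrix.smul_mulVec, Matrix.one_mulVec]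
  have h2 := congrFun h1 j
  simp only [Pi.smul_apply, smul_eq_mul] at h2
  rw [← h2]
  change ∑ i, N.adjugate j i * ∑ k, N i k * q k ∈ I
  exact Ideal.sum_mem _ fun i _ => Ideal.mul_mem_left _ _ (h i)

/-- Clearing the first row `(1, t, t², …)` by column operations reduces the determinant to
size `n`. -/
theorem det_generic_row {R : Type u} [CommRing R] {n : ℕ}
    (T : Matrix (Fin (n + 1)) (Fin (n + 1)) R) (t : R) (hT : ∀ j, T 0 j = t ^ (j : ℕ)) :
    T.det = (Matrix.of fun i j : Fin n => T i.succ j.succ - t ^ (j.succ : ℕ) * T i.succ 0).det := by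
  let B : Matrix (Fin (n + 1)) (Fin (n + 1)) R :=
    Matrix.of fun i j => if j = 0 then T i 0 else T i j - t ^ (j : ℕ) * T i 0
  have h1 : T.det = B.det := by
    rw [← Matrix.det_transpose T, ← Matrix.det_transpose B]
    refine Matrix.det_eq_of_forall_row_eq_smul_add_const
      (fun j => if j = 0 then 0 else t ^ (j : ℕ)) 0 (by simp) fun i j => ?_
    by_cases hi : i = 0 <;> simp [B, hi]
  rw [h1, Matrix.det_succ_row_zero, Fin.sum_univ_succ, Finset.sum_eq_zero]
  · have : B 0 0 = 1 := by simp [B, hT]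
    simp only [this, Fin.val_zero, pow_zero, one_mul, add_zero]
    congr 1
  · intro j _
    have : B 0 j.succ = 0 := by simp [B, hT]
    simp [this]

/-- A relation `∑ t_j q_j = 0` with `t 0 = 1` allows `q 0` to be eliminated from linear
combinations of the `q j`. -/
theorem sum_eliminate_zero {S : Type u} [CommRing S] {n : ℕ} (a t q : Fin (n + 1) → S)
    (ht : t 0 = 1) (h : ∑ j, t j * q j = 0) :
    ∑ j, a j * q j = ∑ j : Fin n, (a j.succ - t j.succ * a 0) * q j.succ := by
  rw [Fin.sum_univ_succ, ht, one_mul, ← eq_neg_iff_add_eq_zero] at h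
  rw [Fin.sum_univ_succ, h, mul_neg, Finset.mul_sum, neg_add_eq_sub, ← Finset.sum_sub_distrib]
  exact Finset.sum_congr rfl fun j _ => by ring

/-- If a regular sequence `y` is written as `y = M q`, then `(y) : det M` is contained in `(q)`.
The sequence is required to be regular when read from the last element to the first.

The proof is by induction on `n`. Over `R[t]` the generic combination `z = ∑ t ^ j q_j` replaces
`y 0`: it is a nonzerodivisor wherever `y 0` is one. If `T` is `M` with first row replaced by
`(1, t, …)`, then `z det M - y₀ det T` is the determinant of a matrix sending `q` to
`(0, y₁, y₂, …)`, hence lies in `(y₁, y₂, …)`. This carries the hypothesis on `g` over to `T`,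
and modulo `z` the generator `q 0` can be eliminated. -/
theorem mem_of_det_mul_mem (n : ℕ) : ∀ {R : Type u} [CommRing R] (y q : Fin n → R)
    (M : Matrix (Fin n) (Fin n) R), (∀ i, y i = ∑ j, M i j * q j) →
    (∀ i g, y i * g ∈ Ideal.span (y '' Set.Ioi i) → g ∈ Ideal.span (y '' Set.Ioi i)) →
    ∀ g, M.det * g ∈ Ideal.span (Set.range y) → g ∈ Ideal.span (Set.range q) := by
  induction n with
  | zero =>
    intro R _ y q M _ _ g hg
    simpa [Set.range_eq_empty] using hg
  | succ n ih =>
    intro R _ y q M hM hreg g hg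
    have hyq : ∀ i (I : Ideal R) c, (∀ j, q j * c ∈ I) → y i * c ∈ I := by
      intro i I c h
      rw [hM, Finset.sum_mul]
      refine Ideal.sum_mem _ fun j _ => ?_
      rw [mul_assoc]
      exact Ideal.mul_mem_left _ _ (h j)
    set Cm : R →+* R[X] := Polynomial.C with hCm
    set z : R[X] := ∑ j : Fin (n + 1), (Polynomial.X : R[X]) ^ (j : ℕ) * Polynomial.C (q j) with hz
    let I : Fin (n + 1) → Ideal R := fun i => Ideal.span (y '' Set.Ioi i)
    have hzreg : ∀ i w, z * w ∈ (I i).map Cm → w ∈ (I i).map Cm := fun i w hw =>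
      generic_combination_regular q (fun c hc => hreg i c (hyq i _ c hc)) hw
    have hyreg : ∀ i w, Cm (y i) * w ∈ (I i).map Cm → w ∈ (I i).map Cm := fun i w hw =>
      mul_mem_map_C_of_regular (hreg i) hw
    have hI0 : I 0 = Ideal.span (Set.range (y ∘ Fin.succ)) := by
      simp only [I, Set.range_comp, Fin.range_succ]
      congr 2
      ext i; simp [Fin.pos_iff_ne_zero]
    have hIcons : ∀ i : Fin n, I i.castSucc = Ideal.span {y i.succ} ⊔ I i.succ := by
      intro i
      simp only [I]
      rw [← Ideal.span_union, Set.singleton_union, ← Set.image_insert_eq]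
      congr 2
      ext k
      simp only [Set.mem_Ioi, Set.mem_insert_iff, Fin.lt_def, Fin.ext_iff, Fin.val_castSucc,
        Fin.val_succ]
      omega
    -- `T` replaces the first row of `M` by `(1, t, t², …)`; `N` is the combination of `M` and `T`
    -- whose first row is orthogonal to `q`.
    let MP := M.map Cm
    let e : Fin (n + 1) → R[X] := fun j => Polynomial.X ^ (j : ℕ)
    let T := MP.updateRow 0 e
    let N := MP.updateRow 0 (z • MP 0 + (-Cm (y 0)) • e)
    have hdetN : N.det = z * Cm M.det - Cm (y 0) * T.det := by
      simp only [N, T]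
      rw [Matrix.det_updateRow_add, Matrix.det_updateRow_smul, Matrix.det_updateRow_smul,
        Matrix.updateRow_eq_self]
      have : MP.det = Cm M.det := (RingHom.map_det Cm M).symm
      rw [this]; ring
    have hNq : ∀ i, ∑ j, N i j * Cm (q j) ∈ (I 0).map Cm := by
      intro i
      refine Fin.cases ?_ (fun i => ?_) i
      · have : ∑ j, N 0 j * Cm (q j) = 0 := by
          have h1 : Cm (y 0) = ∑ j, MP 0 j * Cm (q j) := by
            rw [hM]; simp [MP]
          have h2 : ∀ j, N 0 j * Cm (q j) = z * (MP 0 j * Cm (q j)) - Cm (y 0) * (e j * Cm (q j)) := by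
            intro j; simp [N]; ring
          have h3 : z = ∑ j, e j * Cm (q j) := rfl
          simp only [h2]
          rw [Finset.sum_sub_distrib, ← Finset.mul_sum, ← Finset.mul_sum, ← h1, ← h3]
          ring
        rw [this]; exact Ideal.zero_mem _
      · have : ∑ j, N i.succ j * Cm (q j) = Cm (y i.succ) := by
          rw [hM]; simp [N, MP, Matrix.updateRow_apply]
        rw [this]
        exact Ideal.mem_map_of_mem _ (Ideal.subset_span ⟨_, Fin.succ_pos i, rfl⟩)
    have hNmem : N.det ∈ (I 0).map Cm := by
      refine hyreg 0 _ ?_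
      have : Cm (y 0) = ∑ j, Cm (M 0 j) * Cm (q j) := by rw [hM]; simp
      rw [this, Finset.sum_mul]
      refine Ideal.sum_mem _ fun j _ => ?_
      rw [mul_assoc, mul_comm (Cm (q j))]
      exact Ideal.mul_mem_left _ _ (det_mul_mem_of_mulVec N _ hNq j)
    obtain ⟨h, hh⟩ : ∃ h, M.det * g - y 0 * h ∈ I 0 := by
      have h1 : Ideal.span (Set.range y) = Ideal.span {y 0} ⊔ I 0 := by
        rw [hI0, ← Ideal.span_union, Set.singleton_union, ← Fin.range_cons]
        congr 2
        funext i; refine Fin.cases rfl (fun i => rfl) i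
      rw [h1, Submodule.mem_sup] at hg
      obtain ⟨a, ha, b, hb, hab⟩ := hg
      obtain ⟨h, rfl⟩ := Ideal.mem_span_singleton'.mp ha
      exact ⟨h, by rw [← hab]; convert hb using 1; ring⟩
    have hT : T.det * Cm g - z * Cm h ∈ (I 0).map Cm := by
      refine hyreg 0 _ ?_
      have : Cm (y 0) * (T.det * Cm g - z * Cm h)
          = z * Cm (M.det * g - y 0 * h) - N.det * Cm g := by
        rw [hdetN, map_sub, map_mul, map_mul]; ring
      rw [this]
      exact Ideal.sub_mem _ (Ideal.mul_mem_left _ _ (Ideal.mem_map_of_mem _ hh))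
        (Ideal.mul_mem_right _ _ hNmem)
    -- In `R[t] / (z)` there are only `n` generators left, and the induction hypothesis applies.
    let Z : Ideal R[X] := Ideal.span {z}
    let π : R[X] →+* R[X] ⧸ Z := Ideal.Quotient.mk Z
    have hπz : π z = 0 := Ideal.Quotient.eq_zero_iff_mem.mpr (Ideal.mem_span_singleton_self z)
    have hπ : ∀ (K : Ideal R[X]) w, π w ∈ K.map π → ∃ v, w - z * v ∈ K := by
      intro K w hw
      rw [Ideal.mem_quotient_iff_mem_sup, Submodule.mem_sup] at hw
      obtain ⟨a, ha, b, hb, hab⟩ := hw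
      obtain ⟨v, rfl⟩ := Ideal.mem_span_singleton'.mp hb
      exact ⟨v, by rw [← hab]; convert ha using 1; ring⟩
    let MM : Matrix (Fin n) (Fin n) R[X] :=
      Matrix.of fun i j => T i.succ j.succ - Polynomial.X ^ (j.succ : ℕ) * T i.succ 0
    have hdetT : T.det = MM.det := det_generic_row T Polynomial.X (fun j => by simp [T, e])
    have hspan : ∀ (s : Set R), (Ideal.span ((fun a => π (Cm a)) '' s)) =
        ((Ideal.span s).map Cm).map π := by
      intro s
      rw [Ideal.map_span, Ideal.map_span, Set.image_image]
    have hres := ih (R := R[X] ⧸ Z) (fun i => π (Cm (y i.succ))) (fun j => π (Cm (q j.succ)))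
      (MM.map π) ?_ ?_ (π (Cm g)) ?_
    · have h1 : Set.range (fun j : Fin n => π (Cm (q j.succ))) =
          (fun a => π (Cm a)) '' (Set.range (fun j : Fin n => q j.succ)) := by
        rw [← Set.range_comp]; rfl
      rw [h1, hspan] at hres
      obtain ⟨v, hv⟩ := hπ _ _ hres
      have h2 : Ideal.span (Set.range fun j : Fin n => q j.succ) ≤ Ideal.span (Set.range q) :=
        Ideal.span_mono (by rintro _ ⟨j, rfl⟩; exact ⟨_, rfl⟩)
      have h3 : z ∈ (Ideal.span (Set.range q)).map Cm :=
        Ideal.sum_mem _ fun j _ => Ideal.mul_mem_left _ _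
          (Ideal.mem_map_of_mem _ (Ideal.subset_span ⟨j, rfl⟩))
      have h4 : Cm g ∈ (Ideal.span (Set.range q)).map Cm := by
        have := Ideal.add_mem _ (Ideal.map_mono h2 hv) (Ideal.mul_mem_right v _ h3)
        simpa using this
      have h5 := Ideal.mem_map_C_iff.mp h4 0
      simpa [hCm] using h5
    · intro i
      have h1 : ∑ j : Fin (n + 1), π (Polynomial.X ^ (j : ℕ)) * π (Cm (q j)) = 0 := by
        rw [← hπz, hz, map_sum]
        exact Finset.sum_congr rfl fun j _ => (map_mul π _ _).symm
      have h2 : π (Cm (y i.succ)) = ∑ j, π (Cm (M i.succ j)) * π (Cm (q j)) := by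
        rw [hM]; simp
      rw [h2, sum_eliminate_zero (fun j => π (Cm (M i.succ j))) _ _ (by simp) h1]
      refine Finset.sum_congr rfl fun j _ => ?_
      simp [MM, T, MP, Matrix.updateRow_apply]
    · intro i c hc
      obtain ⟨c, rfl⟩ := Ideal.Quotient.mk_surjective c
      have h1 : (fun i : Fin n => π (Cm (y i.succ))) '' Set.Ioi i =
          (fun a => π (Cm a)) '' (y '' Set.Ioi i.succ) := by
        rw [Set.image_image]
        ext a
        constructor
        · rintro ⟨k, hk, rfl⟩
          exact ⟨k.succ, Fin.succ_lt_succ_iff.mpr hk, rfl⟩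
        · rintro ⟨k, hk, rfl⟩
          obtain ⟨k, rfl⟩ := Fin.exists_succ_eq.mpr (Fin.ne_zero_of_lt hk)
          exact ⟨k, Fin.succ_lt_succ_iff.mp hk, rfl⟩
      rw [h1, hspan] at hc ⊢
      change π (Cm (y i.succ)) * π c ∈ _ at hc
      change π c ∈ _
      rw [← map_mul] at hc
      obtain ⟨w, hw⟩ := hπ _ _ hc
      have h2 : z * w ∈ (I i.castSucc).map Cm := by
        have h3 : Cm (y i.succ) * c ∈ (I i.castSucc).map Cm := by
          refine Ideal.mul_mem_right _ _ (Ideal.mem_map_of_mem _ ?_)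
          exact Ideal.subset_span ⟨_, Fin.castSucc_lt_succ, rfl⟩
        have h4 : I i.succ ≤ I i.castSucc := by rw [hIcons]; exact le_sup_right
        have := Ideal.sub_mem _ h3 (Ideal.map_mono h4 hw)
        simpa using this
      have h3 := hzreg _ _ h2
      rw [hIcons, Ideal.map_sup, Ideal.map_span, Set.image_singleton, Submodule.mem_sup] at h3
      obtain ⟨a, ha, u', hu', huv⟩ := h3
      obtain ⟨v, rfl⟩ := Ideal.mem_span_singleton'.mp ha
      have h4 : c - z * v ∈ (I i.succ).map Cm := by
        refine hyreg _ _ ?_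
        have : Cm (y i.succ) * (c - z * v) = (Cm (y i.succ) * c - z * w) + z * u' := by
          rw [← huv]; ring
        rw [this]
        exact Ideal.add_mem _ hw (Ideal.mul_mem_left _ _ hu')
      have h5 := Ideal.mem_map_of_mem π h4
      rwa [map_sub, map_mul, hπz, zero_mul, sub_zero] at h5
    · have h1 : Set.range (fun i : Fin n => π (Cm (y i.succ))) =
          (fun a => π (Cm a)) '' (Set.range (y ∘ Fin.succ)) := by
        rw [← Set.range_comp]; rfl
      rw [h1, hspan, ← hI0]
      have h2 : (MM.map π).det = π T.det := by rw [hdetT]; exact (RingHom.map_det π MM).symm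
      have h3 := Ideal.mem_map_of_mem π hT
      rw [map_sub, map_mul, map_mul, hπz, zero_mul, sub_zero] at h3
      rw [h2]; exact h3

/-- The coefficients of a syzygy of `q` lie in `(q)`. By Cramer's rule `det M • s` is `Mᵀ` applied
to the vector of determinants of `M` with its `k`-th row replaced by `s`; since `s ⬝ q = 0`, such a
determinant lies in the ideal of the `y i` with `i ≠ k`. -/
theorem syzygy_mem {R : Type u} [CommRing R] {n : ℕ} (y q : Fin n → R)
    (M : Matrix (Fin n) (Fin n) R) (hM : ∀ i, y i = ∑ j, M i j * q j)
    (hreg : ∀ i g, y i * g ∈ Ideal.span (y '' {i}ᶜ) → g ∈ Ideal.span (y '' {i}ᶜ))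
    (hdet : ∀ g, M.det * g ∈ Ideal.span (Set.range y) → g ∈ Ideal.span (Set.range q))
    (s : Fin n → R) (hs : ∑ j, s j * q j = 0) (j : Fin n) : s j ∈ Ideal.span (Set.range q) := by
  apply hdet
  have h1 : Matrix.mulVec M.transpose (Matrix.cramer M.transpose s) = M.det • s := by
    rw [Matrix.mulVec_cramer, Matrix.det_transpose]
  have h2 := congrFun h1 j
  simp only [Pi.smul_apply, smul_eq_mul] at h2
  rw [← h2, Matrix.mulVec, dotProduct]
  refine Ideal.sum_mem _ fun k _ => Ideal.mul_mem_left _ _ ?_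
  rw [Matrix.cramer_transpose_apply]
  refine Ideal.span_mono (Set.image_subset_range y ({k}ᶜ : Set (Fin n))) (hreg k _ ?_)
  rw [hM k, Finset.sum_mul]
  refine Ideal.sum_mem _ fun l _ => ?_
  rw [mul_assoc, mul_comm (q l)]
  refine Ideal.mul_mem_left _ _ (det_mul_mem_of_mulVec _ _ (fun i => ?_) l)
  by_cases hi : i = k
  · subst hi
    simp [hs]
  · have : ∑ j, (M.updateRow k s) i j * q j = y i := by
      rw [hM]; simp [Matrix.updateRow_apply, hi]
    rw [this]
    exact Ideal.subset_span ⟨i, hi, rfl⟩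

end Residual

/-! ### The socle functional of an Artinian complete intersection of quadrics -/

section Duality

theorem homogeneousComponent_mul_of_isHomogeneous {n d m : ℕ} (h q : MvPolynomial (Fin n) ℂ)
    (hq : q.IsHomogeneous m) :
    homogeneousComponent (d + m) (h * q) = homogeneousComponent d h * q := by
  conv_lhs => rw [← sum_homogeneousComponent h, Finset.sum_mul, map_sum]
  have h1 : ∀ i, homogeneousComponent (d + m) (homogeneousComponent i h * q) =
      if i = d then homogeneousComponent d h * q else 0 := by
    intro i
    rw [homogeneousComponent_of_mem (n := i + m)
      ((homogeneousComponent_isHomogeneous i h).mul hq)]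
    by_cases hi : i = d
    · simp [hi]
    · have hi' : ¬ d = i := fun h => hi h.symm
      simp [hi, hi']
  simp only [h1]
  rw [Finset.sum_ite_eq' (Finset.range (h.totalDegree + 1)) d]
  split_ifs with hd
  · rfl
  · rw [homogeneousComponent_eq_zero, zero_mul]
    simpa using hd

/-- A form in the ideal generated by forms of degree `m` is a combination of them with homogeneous
coefficients of the complementary degree. -/
theorem exists_homogeneous_coeffs {n d m : ℕ} {ι : Type} [Fintype ι]
    (q : ι → MvPolynomial (Fin n) ℂ) (hq : ∀ j, (q j).IsHomogeneous m)
    {p : MvPolynomial (Fin n) ℂ} (hp : p.IsHomogeneous (d + m))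
    (hpJ : p ∈ Ideal.span (Set.range q)) :
    ∃ u : ι → MvPolynomial (Fin n) ℂ, (∀ j, (u j).IsHomogeneous d) ∧ p = ∑ j, u j * q j := by
  obtain ⟨h, hh⟩ := (Ideal.mem_span_range_iff_exists_fun).mp hpJ
  refine ⟨fun j => homogeneousComponent d (h j), fun j => homogeneousComponent_isHomogeneous _ _, ?_⟩
  have h1 := congrArg (homogeneousComponent (d + m)) hh
  rw [homogeneousComponent_eq_self hp, map_sum] at h1
  rw [← h1]
  exact Finset.sum_congr rfl fun j _ => homogeneousComponent_mul_of_isHomogeneous _ _ (hq j)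

theorem mem_span_X_pow {n N : ℕ} (s : Set (Fin n)) (p : MvPolynomial (Fin n) ℂ) :
    p ∈ Ideal.span ((fun i => (X i : MvPolynomial (Fin n) ℂ) ^ N) '' s) ↔
      ∀ m ∈ p.support, ∃ i ∈ s, N ≤ m i := by
  have h := mem_ideal_span_monomial_image (x := p)
    (s := (fun i => Finsupp.single i N) '' s)
  rw [Set.image_image] at h
  have h2 : (fun i => (X i : MvPolynomial (Fin n) ℂ) ^ N) =
      fun i => monomial (Finsupp.single i N) (1 : ℂ) := by
    funext i; rw [X_pow_eq_monomial]
  rw [h2, h]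
  simp

/-- In any order, the powers `X i ^ N` form a regular sequence. -/
theorem X_pow_regular {n N : ℕ} (s : Set (Fin n)) (i : Fin n) (hi : i ∉ s)
    (g : MvPolynomial (Fin n) ℂ)
    (hg : X i ^ N * g ∈ Ideal.span ((fun i => (X i : MvPolynomial (Fin n) ℂ) ^ N) '' s)) :
    g ∈ Ideal.span ((fun i => (X i : MvPolynomial (Fin n) ℂ) ^ N) '' s) := by
  rw [mem_span_X_pow] at hg ⊢
  intro m hm
  have h1 : coeff (Finsupp.single i N + m) (X i ^ N * g) = coeff m g := by
    rw [X_pow_eq_monomial, coeff_monomial_mul, one_mul]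
  obtain ⟨j, hj, hjN⟩ := hg (Finsupp.single i N + m) (by
    rw [MvPolynomial.mem_support_iff, h1]; exact MvPolynomial.mem_support_iff.mp hm)
  refine ⟨j, hj, ?_⟩
  have : i ≠ j := fun h => hi (h ▸ hj)
  simpa [Finsupp.single_apply, this] using hjN

theorem det_isHomogeneous {n k d : ℕ} (M : Matrix (Fin k) (Fin k) (MvPolynomial (Fin n) ℂ))
    (hM : ∀ i j, (M i j).IsHomogeneous d) : M.det.IsHomogeneous (k * d) := by
  rw [Matrix.det_apply']
  refine IsHomogeneous.sum _ _ _ fun σ _ => ?_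
  have h1 : ∀ z : ℤ, ((z : MvPolynomial (Fin n) ℂ)).IsHomogeneous 0 := by
    intro z
    have : (z : MvPolynomial (Fin n) ℂ) = C (z : ℂ) := by simp
    rw [this]; exact isHomogeneous_C _ _
  have h2 := IsHomogeneous.prod Finset.univ (fun i => M (σ i) i) (fun _ => d) fun i _ => hM _ _
  have h3 := (h1 (Equiv.Perm.sign σ)).mul h2
  simpa using h3

/-- By the Nullstellensatz, forms with no common zero outside the origin generate an ideal
containing high powers of all variables; the exponent can be taken at least `m`. -/
theorem exists_X_pow_mem {n m : ℕ} (q : Fin n → MvPolynomial (Fin n) ℂ)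
    (hsm : ∀ x : Fin n → ℂ, x ≠ 0 → ∃ i, eval x (q i) ≠ 0) :
    ∃ k, ∀ i, (X i : MvPolynomial (Fin n) ℂ) ^ (k + m) ∈ Ideal.span (Set.range q) := by
  set J := Ideal.span (Set.range q)
  have h1 : ∀ i, (X i : MvPolynomial (Fin n) ℂ) ∈ J.radical := by
    intro i
    rw [← vanishingIdeal_zeroLocus_eq_radical (K := ℂ), mem_vanishingIdeal_iff]
    intro x hx
    by_cases h0 : x = 0
    · simp [h0]
    · obtain ⟨j, hj⟩ := hsm x h0
      exact absurd (by simpa using hx (q j) (Ideal.subset_span ⟨j, rfl⟩)) hj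
  choose e he using h1
  refine ⟨∑ i, e i, fun i => ?_⟩
  have h2 : e i ≤ ∑ i, e i :=
    Finset.single_le_sum (f := e) (fun _ _ => Nat.zero_le _) (Finset.mem_univ i)
  exact Ideal.pow_mem_of_pow_mem _ (he i) (le_trans h2 (Nat.le_add_right _ _))

/-- Let `n` quadrics `q` in `n` variables have no common zero outside the origin, and let
`J = (q)`. There is a functional `Λ`, concentrated in degree `n`, vanishing on `J` and inducing a
perfect pairing on the quotient; and the coefficients of every syzygy of `q` lie in `J`.

Writing `X i ^ (k + 2) = ∑ j, M i j * q j`, the functional is the coefficient of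
`∏ i, X i ^ (k + 1)` in `det M * g`. It is nondegenerate because the monomial algebra
`ℂ[X] / (X i ^ (k + 2))` is Gorenstein and because `(X i ^ (k + 2)) : det M` is contained in `J`. -/
theorem exists_dual_socle_generator {n : ℕ} (q : Fin n → MvPolynomial (Fin n) ℂ)
    (hq : ∀ j, (q j).IsHomogeneous 2)
    (hsm : ∀ x : Fin n → ℂ, x ≠ 0 → ∃ i, eval x (q i) ≠ 0) :
    (∃ Λ : MvPolynomial (Fin n) ℂ →ₗ[ℂ] ℂ,
      (∀ g ∈ Ideal.span (Set.range q), Λ g = 0) ∧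
      (∀ g, (∀ h, Λ (g * h) = 0) → g ∈ Ideal.span (Set.range q)) ∧
      (∀ d g, g.IsHomogeneous d → d ≠ n → Λ g = 0)) ∧
    (∀ s : Fin n → MvPolynomial (Fin n) ℂ, ∑ j, s j * q j = 0 →
      ∀ j, s j ∈ Ideal.span (Set.range q)) := by
  obtain ⟨k, hk⟩ := exists_X_pow_mem (m := 2) q hsm
  let y : Fin n → MvPolynomial (Fin n) ℂ := fun i => X i ^ (k + 2)
  have hrange : Set.range y = y '' Set.univ := Set.image_univ.symm
  have hrep : ∀ i, ∃ u : Fin n → MvPolynomial (Fin n) ℂ,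
      (∀ j, (u j).IsHomogeneous k) ∧ y i = ∑ j, u j * q j := fun i =>
    exists_homogeneous_coeffs q hq (isHomogeneous_X_pow i (k + 2)) (hk i)
  choose u hu hy using hrep
  let M : Matrix (Fin n) (Fin n) (MvPolynomial (Fin n) ℂ) := Matrix.of u
  have hdet : ∀ g, M.det * g ∈ Ideal.span (Set.range y) → g ∈ Ideal.span (Set.range q) :=
    mem_of_det_mul_mem n y q M hy fun i g hg => X_pow_regular _ i (by simp) g hg
  refine ⟨?_, syzygy_mem y q M hy (fun i g hg => X_pow_regular _ i (by simp) g hg) hdet⟩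
  let top : Fin n →₀ ℕ := Finsupp.equivFunOnFinite.symm fun _ => k + 1
  have htop : ∀ i, top i = k + 1 := fun i => rfl
  refine ⟨(lcoeff ℂ top) ∘ₗ LinearMap.mulLeft ℂ M.det, ?_, ?_, ?_⟩
  · intro g hg
    have h1 : M.det * g ∈ Ideal.span (y '' Set.univ) := by
      rw [← hrange]
      refine Submodule.span_induction (p := fun g _ => M.det * g ∈ Ideal.span (Set.range y))
        ?_ ?_ ?_ ?_ hg
      · rintro _ ⟨j, rfl⟩
        refine det_mul_mem_of_mulVec M q (fun i => ?_) j
        have := hy i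
        exact this ▸ Ideal.subset_span ⟨i, rfl⟩
      · simp
      · intro a b _ _ ha hb
        rw [mul_add]; exact Ideal.add_mem _ ha hb
      · intro a b _ hb
        rw [smul_eq_mul, mul_left_comm]; exact Ideal.mul_mem_left _ _ hb
    rw [mem_span_X_pow] at h1
    by_contra hne
    obtain ⟨i, _, hi⟩ := h1 top (MvPolynomial.mem_support_iff.mpr hne)
    rw [htop] at hi
    omega
  · intro g hg
    apply hdet
    rw [hrange, mem_span_X_pow]
    intro m hm
    by_contra hcon
    push Not at hcon
    have hle : m ≤ top := fun i => by
      have := hcon i (Set.mem_univ i)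
      rw [htop]; omega
    have h1 : coeff top (M.det * (g * monomial (top - m) 1)) = 0 := hg (monomial (top - m) 1)
    rw [← mul_assoc] at h1
    have h2 := coeff_mul_monomial m (top - m) (1 : ℂ) (M.det * g)
    rw [add_tsub_cancel_of_le hle, h1, mul_one] at h2
    exact (MvPolynomial.mem_support_iff.mp hm) h2.symm
  · intro d g hg hd
    have h1 := (det_isHomogeneous M hu).mul hg
    refine h1.coeff_eq_zero ?_
    have h2 : top.degree = n * (k + 1) := by
      rw [Finsupp.degree_eq_sum]
      simp [htop]
    rw [h2]
    intro h
    apply hd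
    rw [mul_add] at h
    omega

end Duality

/-! ### A lemma on `4 × 4` matrices -/

section LinearAlgebra

/-- If `β ≠ 0`, its kernel `W` has dimension at most `3`. The span `τ` of `ψ` and the image of `D`
lies in `W` and is killed by the functional `δ x`, which does not kill `x ∈ W`; so `dim τ ≤ 2`, and
the preimage `N` under `D` of the line of `ψ` has dimension at least `3`. As `N ≤ W`, the two agree,
so `D` maps everything into `N`, which makes `2 γ D` and hence `β` vanish. -/
theorem polar_eq_zero_field {K : Type*} [Field K]
    (β γ δ D : Matrix (Fin 4) (Fin 4) K) (ψ x : Fin 4 → K) (hψ : ψ ≠ 0)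
    (hγ : γ.transpose = γ) (hδ : δ.transpose = δ)
    (h1 : (2 : K) • γ + δ * D = 0) (h4 : β + (2 : K) • (γ * D) = 0)
    (hβψ : β.mulVec ψ = 0) (hβD : β * D = 0) (hβx : β.mulVec x = 0)
    (hγψ : γ.mulVec ψ = 0) (hδψ : δ.mulVec ψ = 0) (hγx : γ.mulVec x = 0)
    (hx : δ.mulVec x ⬝ᵥ x ≠ 0) : β = 0 := by
  have hγv : ∀ v, (2 : K) • γ.mulVec v = - δ.mulVec (D.mulVec v) := by
    intro v
    have := congrArg (fun A => Matrix.mulVec A v) h1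
    simp only [Matrix.add_mulVec, Matrix.smul_mulVec, Matrix.zero_mulVec,
      ← Matrix.mulVec_mulVec] at this
    exact eq_neg_of_add_eq_zero_left this
  have hβv : ∀ v, β.mulVec v = - (2 : K) • γ.mulVec (D.mulVec v) := by
    intro v
    have := congrArg (fun A => Matrix.mulVec A v) h4
    simp only [Matrix.add_mulVec, Matrix.smul_mulVec, Matrix.zero_mulVec,
      ← Matrix.mulVec_mulVec] at this
    rw [neg_smul]
    exact eq_neg_of_add_eq_zero_left this
  by_contra hβ
  set W := LinearMap.ker β.mulVecLin with hW
  set P := Submodule.span K {ψ} with hP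
  set τ := P ⊔ LinearMap.range D.mulVecLin with hτ
  set N := P.comap D.mulVecLin with hN
  have hWtop : W ≠ ⊤ := by
    intro h
    apply hβ
    rw [hW, LinearMap.ker_eq_top] at h
    ext i j
    have := congrFun (congrArg (fun L => L (Pi.single j 1)) h) i
    simpa using this
  have hWlt : finrank K W < 4 := by
    have := Submodule.finrank_lt (lt_top_iff_ne_top.mpr hWtop).ne
    simpa using this
  have hτW : τ ≤ W := by
    refine sup_le ?_ ?_
    · rw [hP, Submodule.span_singleton_le_iff_mem]
      simpa [hW] using hβψ
    · rintro _ ⟨v, rfl⟩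
      simp [hW, hβD]
  have hτφ : ∀ v ∈ τ, δ.mulVec x ⬝ᵥ v = 0 := by
    have hsw : ∀ v, δ.mulVec x ⬝ᵥ v = x ⬝ᵥ δ.mulVec v := by
      intro v
      rw [Matrix.dotProduct_mulVec, ← Matrix.mulVec_transpose, hδ]
    have hsw' : ∀ v, x ⬝ᵥ γ.mulVec v = 0 := by
      intro v
      rw [Matrix.dotProduct_mulVec, ← Matrix.mulVec_transpose, hγ, hγx, zero_dotProduct]
    intro v hv
    obtain ⟨a, ha, b, ⟨m, rfl⟩, rfl⟩ := Submodule.mem_sup.mp hv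
    obtain ⟨c, rfl⟩ := Submodule.mem_span_singleton.mp ha
    have h := hγv m
    have h' : δ.mulVec (D.mulVec m) = - (2 : K) • γ.mulVec m := by
      rw [neg_smul, h, neg_neg]
    rw [dotProduct_add, hsw, hsw, Matrix.mulVec_smul, hδψ, Matrix.mulVecLin_apply, h',
      dotProduct_smul, dotProduct_smul, hsw']
    simp
  have hlt : τ < W := by
    refine lt_of_le_of_ne hτW fun h => hx (hτφ x ?_)
    rw [h]
    simpa [hW] using hβx
  have hτ2 : finrank K τ ≤ 2 := by
    have := Submodule.finrank_lt_finrank_of_lt hlt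
    omega
  have hNrank : 3 ≤ finrank K N := by
    have e1 := LinearMap.finrank_range_add_finrank_ker (P.mkQ ∘ₗ D.mulVecLin)
    have e2 := LinearMap.finrank_range_add_finrank_ker (P.mkQ.domRestrict τ)
    have e3 : LinearMap.ker (P.mkQ ∘ₗ D.mulVecLin) = N := by
      rw [LinearMap.ker_comp, Submodule.ker_mkQ]
    have e4 : LinearMap.range (P.mkQ ∘ₗ D.mulVecLin) ≤ LinearMap.range (P.mkQ.domRestrict τ) := by
      rintro _ ⟨v, rfl⟩
      exact ⟨⟨D.mulVecLin v, Submodule.mem_sup_right ⟨v, rfl⟩⟩, rfl⟩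
    have e5 := Submodule.finrank_mono e4
    have e6 : LinearMap.ker (P.mkQ.domRestrict τ) ≠ ⊥ := by
      intro h
      have hmem : ψ ∈ P := Submodule.mem_span_singleton_self ψ
      have : (⟨ψ, Submodule.mem_sup_left hmem⟩ : τ) ∈ LinearMap.ker (P.mkQ.domRestrict τ) := by
        simpa using hmem
      rw [h, Submodule.mem_bot] at this
      exact hψ (congrArg Subtype.val this)
    have e7 : 0 < finrank K (LinearMap.ker (P.mkQ.domRestrict τ)) := by
      rw [Nat.pos_iff_ne_zero]
      exact fun h => e6 (Submodule.finrank_eq_zero.mp h)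
    rw [e3, Module.finrank_fin_fun] at e1
    omega
  have hNW : N ≤ W := by
    intro m hm
    obtain ⟨c, hc⟩ := Submodule.mem_span_singleton.mp hm
    have hc' : D.mulVec m = c • ψ := hc.symm
    have := hβv m
    rw [hc', Matrix.mulVec_smul, hγψ, smul_zero, smul_zero] at this
    simpa [hW] using this
  have hNeq : N = W := Submodule.eq_of_le_of_finrank_le hNW (by omega)
  apply hWtop
  rw [eq_top_iff]
  intro m _
  have hm : D.mulVec m ∈ N := by
    rw [hNeq]
    exact hτW (Submodule.mem_sup_right ⟨m, rfl⟩)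
  obtain ⟨c, hc⟩ := Submodule.mem_span_singleton.mp hm
  have hc' : D.mulVec (D.mulVec m) = c • ψ := hc.symm
  have h3 := hγv (D.mulVec m)
  rw [hc', Matrix.mulVec_smul, hδψ, smul_zero, neg_zero] at h3
  have h5 := hβv m
  rw [neg_smul, h3, neg_zero] at h5
  simpa [hW] using h5

/-- The preceding lemma over a domain, by passing to the field of fractions. -/
theorem polar_eq_zero {P : Type*} [CommRing P] [IsDomain P]
    (β γ δ D : Matrix (Fin 4) (Fin 4) P) (ψ x : Fin 4 → P) (hψ : ψ ≠ 0)
    (hγ : γ.transpose = γ) (hδ : δ.transpose = δ)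
    (h1 : (2 : P) • γ + δ * D = 0) (h4 : β + (2 : P) • (γ * D) = 0)
    (hβψ : β.mulVec ψ = 0) (hβD : β * D = 0) (hβx : β.mulVec x = 0)
    (hγψ : γ.mulVec ψ = 0) (hδψ : δ.mulVec ψ = 0) (hγx : γ.mulVec x = 0)
    (hx : δ.mulVec x ⬝ᵥ x ≠ 0) : β = 0 := by
  let φ := algebraMap P (FractionRing P)
  have hφ : Function.Injective φ := IsFractionRing.injective P (FractionRing P)
  have hφ2 : φ 2 = 2 := map_ofNat φ 2
  have hvec : ∀ (A : Matrix (Fin 4) (Fin 4) P) v, A.mulVec v = 0 →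
      (A.map φ).mulVec (φ ∘ v) = 0 := by
    intro A v h
    funext i
    rw [← RingHom.map_mulVec, h]
    simp
  have key : β.map φ = 0 := by
    refine polar_eq_zero_field (β.map φ) (γ.map φ)
      (δ.map φ) (D.map φ) (φ ∘ ψ) (φ ∘ x) ?_ ?_ ?_ ?_ ?_ (hvec _ _ hβψ) ?_ (hvec _ _ hβx) (hvec _ _ hγψ) (hvec _ _ hδψ)
      (hvec _ _ hγx) ?_
    · intro h
      apply hψ
      funext i
      exact hφ (by simpa using congrFun h i)
    · rw [← Matrix.transpose_map, hγ]
    · rw [← Matrix.transpose_map, hδ]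
    · ext i j
      have := congrArg φ (congrFun (congrFun h1 i) j)
      simpa [Matrix.mul_apply, hφ2] using this
    · ext i j
      have := congrArg φ (congrFun (congrFun h4 i) j)
      simpa [Matrix.mul_apply, hφ2] using this
    · rw [← Matrix.map_mul, hβD]; simp
    · intro h
      apply hx
      apply hφ
      rw [map_zero, ← h]
      simp [dotProduct, Matrix.mulVec]
  ext i j
  apply hφ
  simpa using congrFun (congrFun key i) j

end LinearAlgebra

/-! ### Quartic forms in four variables with vanishing Hessian -/

section GordanNoether

/-- The polynomial ring `ℂ[x₀, x₁, x₂, x₃]`. -/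
abbrev Poly4 := MvPolynomial (Fin 4) ℂ

/-- Polynomial vector fields on `ℂ⁴`. -/
abbrev Vec4 := Fin 4 → Poly4

/-- Quadrilinear forms on polynomial vector fields. -/
abbrev Form4 := Vec4 →ₗ[Poly4] Vec4 →ₗ[Poly4] Vec4 →ₗ[Poly4] Vec4 →ₗ[Poly4] Poly4

/-- The coordinatewise partial derivative of a polynomial vector field. -/
noncomputable def vecDeriv (m : Fin 4) (a : Vec4) : Vec4 := fun i => pderiv m (a i)

/-- `F` is the extension to polynomial vector fields of a symmetric quadrilinear form on `ℂ⁴`.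
Constancy of the coefficients is expressed by the Leibniz rule without a derivative of `F`. -/
structure IsConstQuartic (F : Form4) : Prop where
  swap₁ : ∀ a b c d, F a b c d = F b a c d
  swap₂ : ∀ a b c d, F a b c d = F a c b d
  swap₃ : ∀ a b c d, F a b c d = F a b d c
  leibniz : ∀ m a b c d, pderiv m (F a b c d) = F (vecDeriv m a) b c d + F a (vecDeriv m b) c d +
    F a b (vecDeriv m c) d + F a b c (vecDeriv m d)

theorem vecDeriv_X (m : Fin 4) : vecDeriv m (fun i => (X i : Poly4)) = Pi.single m 1 := by
  funext i
  simp [vecDeriv, pderiv_X, Pi.single_apply]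

theorem eq_sum_single (v : Vec4) : v = ∑ i, v i • (Pi.single i 1 : Vec4) := by
  funext j
  simp [Finset.sum_apply, Pi.single_apply]

theorem linearMap_apply_eq_sum {M : Type*} [AddCommMonoid M] [Module Poly4 M]
    (L : Vec4 →ₗ[Poly4] M) (v : Vec4) : L v = ∑ i, v i • L (Pi.single i 1) := by
  conv_lhs => rw [eq_sum_single v]
  simp

theorem linearMap_eq_zero {M : Type*} [AddCommMonoid M] [Module Poly4 M]
    (L : Vec4 →ₗ[Poly4] M) (h : ∀ i, L (Pi.single i 1) = 0) (v : Vec4) : L v = 0 := by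
  rw [linearMap_apply_eq_sum]
  simp [h]

/-- Let `x` be the tautological vector field. If the quartic `F(x, x, x, x)` is nonzero but its
Hessian `F(x, x, ·, ·)` has a nonzero kernel vector `ψ`, then either `F` is degenerate, or there are
linearly independent `a`, `b` with `F(a, a, ·, ·) = F(a, b, ·, ·) = 0`.

The Gordan–Noether identities obtained by differentiating `F(x, x, ψ, ·) = 0` give the hypotheses of
`polar_eq_zero`, whence `F(ψ, ψ, ·, ·) = 0`. Differentiating once more, `a = ψ` and a partial
derivative `b` of `ψ` do, unless all of these are proportional to `ψ`; in that case the identities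
show that `ψ` is in the kernel of `F`. -/
theorem IsConstQuartic.kernel_dichotomy {F : Form4} (hF : IsConstQuartic F)
    (hX : F (fun i => X i) (fun i => X i) (fun i => X i) (fun i => X i) ≠ 0)
    (ψ : Vec4) (hψ0 : ψ ≠ 0) (hψ : ∀ v, F (fun i => X i) (fun i => X i) ψ v = 0) :
    (∃ a : Vec4, a ≠ 0 ∧ ∀ u v w, F a u v w = 0) ∨
    (∃ a b : Vec4, (∃ i j, a i * b j - a j * b i ≠ 0) ∧
      (∀ v w, F a a v w = 0) ∧ ∀ v w, F a b v w = 0) := by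
  set x : Vec4 := fun i => X i with hx
  have dx : ∀ m, vecDeriv m x = Pi.single m 1 := vecDeriv_X
  have s1 := hF.swap₁
  have s2 := hF.swap₂
  have s3 := hF.swap₃
  have s22 : ∀ a b c d, F a b c d = F c d a b := fun a b c d => by
    rw [s2 a b c d, s1 a c b d, s3 c a b d, s2 c a d b]
  have hL := hF.leibniz
  -- Terms with a derivative of the free arguments `v` and `w` vanish by the identity that is being
  -- differentiated, so the identities hold for all polynomial vector fields `v`, `w`.
  have e1 : ∀ m v, 2 * F x (Pi.single m 1) ψ v + F x x (vecDeriv m ψ) v = 0 := by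
    intro m v
    have h := hL m x x ψ v
    rw [hψ, hψ, map_zero, dx, s1 (Pi.single m 1) x] at h
    linear_combination -h
  have e3 : ∀ a, (∀ v, F x x a v = 0) → ∀ w, F x w ψ a = 0 := by
    intro a ha w
    have : ∀ m, F x (Pi.single m 1) a ψ = 0 := by
      intro m
      have h := e1 m a
      rw [s3 x x, ha, add_zero, s3] at h
      simpa using h
    have h := linearMap_eq_zero ((F x).flip a |>.flip ψ) (by simpa using this) w
    rw [s3]
    simpa using h
  have e2 : ∀ w, F x w ψ ψ = 0 := e3 ψ hψ
  have e4 : ∀ m w, F (Pi.single m 1) w ψ ψ + 2 * F x w ψ (vecDeriv m ψ) = 0 := by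
    intro m w
    have h := hL m x w ψ ψ
    rw [e2, e2, map_zero, dx, s3 x w (vecDeriv m ψ) ψ] at h
    linear_combination -h
  have e5 : ∀ w, F ψ w ψ ψ = 0 := by
    intro w
    -- the derivative of `ψ` along `ψ`, which again lies in the kernel of the Hessian
    let a : Vec4 := ∑ m, ψ m • vecDeriv m ψ
    have ha : ∀ v, F x x a v = 0 := by
      intro v
      have h1 : F x x a v = ∑ m, ψ m * F x x (vecDeriv m ψ) v := by simp [a]
      have h2 : F x ψ ψ v = ∑ m, ψ m * F x (Pi.single m 1) ψ v := by
        rw [linearMap_apply_eq_sum (F x) ψ]; simp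
      have h3 : F x ψ ψ v = 0 := by rw [s3, s2, e2]
      rw [h3] at h2
      have : F x x a v = -2 * ∑ m, ψ m * F x (Pi.single m 1) ψ v := by
        rw [h1, Finset.mul_sum]
        refine Finset.sum_congr rfl fun m _ => ?_
        linear_combination ψ m * e1 m v
      rw [this, ← h2, mul_zero]
    have h1 : F ψ w ψ ψ = ∑ m, ψ m * F (Pi.single m 1) w ψ ψ := by
      rw [linearMap_apply_eq_sum F ψ]; simp
    have h2 : F x w ψ a = ∑ m, ψ m * F x w ψ (vecDeriv m ψ) := by simp [a]
    rw [e3 a ha w] at h2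
    have : F ψ w ψ ψ = -2 * ∑ m, ψ m * F x w ψ (vecDeriv m ψ) := by
      rw [h1, Finset.mul_sum]
      refine Finset.sum_congr rfl fun m _ => ?_
      linear_combination ψ m * e4 m w
    rw [this, ← h2, mul_zero]
  have e6 : ∀ m w, F ψ ψ w (vecDeriv m ψ) = 0 := by
    intro m w
    have h := hL m ψ w ψ ψ
    rw [e5, e5, map_zero, s3 ψ w (vecDeriv m ψ), s2 ψ w ψ, s1 (vecDeriv m ψ), s2 w, s1 w, s3 ψ w,
      s2 ψ w] at h
    have h' : 3 * F ψ ψ w (vecDeriv m ψ) = 0 := by linear_combination -h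
    simpa using h'
  -- the Hessian matrices of the polars, and the Jacobian matrix of `ψ`
  let mat : (Vec4 →ₗ[Poly4] Vec4 →ₗ[Poly4] Poly4) → Matrix (Fin 4) (Fin 4) Poly4 :=
    fun B => Matrix.of fun i j => B (Pi.single i 1) (Pi.single j 1)
  let D : Matrix (Fin 4) (Fin 4) Poly4 := Matrix.of fun i j => pderiv j (ψ i)
  have hmv : ∀ B v i, (mat B).mulVec v i = B (Pi.single i 1) v := by
    intro B v i
    rw [linearMap_apply_eq_sum (B (Pi.single i 1)) v]
    simp [mat, Matrix.mulVec, dotProduct, mul_comm]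
  have hmD : ∀ B i j, (mat B * D) i j = B (Pi.single i 1) (vecDeriv j ψ) := by
    intro B i j
    rw [linearMap_apply_eq_sum (B (Pi.single i 1)) (vecDeriv j ψ)]
    simp [mat, D, Matrix.mul_apply, vecDeriv, mul_comm]
  have hβ : mat (F ψ ψ) = 0 := by
    refine polar_eq_zero (mat (F ψ ψ)) (mat (F x ψ)) (mat (F x x)) D ψ x hψ0 ?_ ?_ ?_ ?_ ?_ ?_ ?_
      ?_ ?_ ?_ ?_
    · ext1 i j
      exact s3 _ _ _ _
    · ext1 i j
      exact s3 _ _ _ _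
    · ext1 i j
      have h := e1 j (Pi.single i 1)
      rw [s2, s3 x ψ, s3 x x] at h
      simpa [hmD, mat] using h
    · ext1 i j
      have h := e4 j (Pi.single i 1)
      rw [s22, s3, s2 x] at h
      simpa [hmD, mat] using h
    · funext i
      rw [hmv, s2, e5]; rfl
    · ext1 i j
      rw [hmD, e6]; rfl
    · funext i
      rw [hmv, s22, s1, e2]; rfl
    · funext i
      rw [hmv, s2, e2]; rfl
    · funext i
      rw [hmv, s3, hψ]; rfl
    · funext i
      rw [hmv, s3, s2, hψ]; rfl
    · intro h
      apply hX
      rw [linearMap_apply_eq_sum (F x x) x, ← h]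
      simp [dotProduct, hmv, mul_comm]
  have e7 : ∀ v w, F ψ ψ v w = 0 := by
    intro v w
    have : ∀ i, F ψ ψ (Pi.single i 1) = 0 := by
      intro i
      refine LinearMap.ext fun w => ?_
      refine linearMap_eq_zero (F ψ ψ (Pi.single i 1)) (fun j => ?_) w
      exact congrFun (congrFun hβ i) j
    rw [linearMap_eq_zero (F ψ ψ) this v]; rfl
  have e8 : ∀ m v w, F ψ (vecDeriv m ψ) v w = 0 := by
    intro m v w
    have h := hL m ψ ψ v w
    rw [e7, e7, e7, map_zero, s1 (vecDeriv m ψ)] at h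
    have h' : 2 * F ψ (vecDeriv m ψ) v w = 0 := by linear_combination -h
    simpa using h'
  by_cases hmin : ∃ m i j, ψ i * vecDeriv m ψ j - ψ j * vecDeriv m ψ i ≠ 0
  · obtain ⟨m, hm⟩ := hmin
    exact Or.inr ⟨ψ, vecDeriv m ψ, hm, e7, e8 m⟩
  · push Not at hmin
    left
    obtain ⟨k, hk⟩ := Function.ne_iff.mp hψ0
    have hpar : ∀ m, ψ k • vecDeriv m ψ = vecDeriv m ψ k • ψ := by
      intro m
      funext j
      simp only [Pi.smul_apply, smul_eq_mul]
      linear_combination hmin m k j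
    have hcancel : ∀ (L : Vec4 →ₗ[Poly4] Poly4), L ψ = 0 → ∀ m, L (vecDeriv m ψ) = 0 := by
      intro L hL m
      have h := congrArg L (hpar m)
      rw [map_smul, map_smul, hL, smul_zero, smul_eq_mul] at h
      exact (mul_eq_zero.mp h).resolve_left hk
    have e9 : ∀ u v, F x u ψ v = 0 := by
      intro u v
      have : ∀ m, F x (Pi.single m 1) ψ v = 0 := by
        intro m
        have h := e1 m v
        have h' : F x x (vecDeriv m ψ) v = 0 := hcancel ((F x x).flip v) (hψ v) m
        rw [h', add_zero] at h
        simpa using h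
      exact linearMap_eq_zero (((F x).flip ψ).flip v) this u
    refine ⟨ψ, hψ0, fun u v w => ?_⟩
    rw [s1, s2]
    have : ∀ m, F (Pi.single m 1) v ψ w = 0 := by
      intro m
      have h := hL m x v ψ w
      have h' : F x v (vecDeriv m ψ) w = 0 := hcancel ((F x v).flip w) (e9 v w) m
      rw [e9, e9, e9, h', map_zero, dx] at h
      linear_combination -h
    exact linearMap_eq_zero (((F.flip v).flip ψ).flip w) this u

/-- The linear form with coefficient vector `a`. -/
noncomputable def lin (a : Fin 4 → ℂ) : Poly4 := ∑ i, C (a i) * X i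

/-- The quadrilinear form `(a, b, c, d) ↦ Λ(ℓ_a ℓ_b ℓ_c ℓ_d)`, where `ℓ_a` is the linear form with
coefficient vector `a`, extended to polynomial vector fields. -/
noncomputable def quarticForm (Λ : Poly4 →ₗ[ℂ] ℂ) : Form4 :=
  ∑ i, ∑ j, ∑ k, ∑ l,
    (LinearMap.proj i : Vec4 →ₗ[Poly4] Poly4).smulRight
      ((LinearMap.proj j : Vec4 →ₗ[Poly4] Poly4).smulRight
        ((LinearMap.proj k : Vec4 →ₗ[Poly4] Poly4).smulRight
          ((C (Λ (X i * X j * X k * X l)) : Poly4) •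
            (LinearMap.proj l : Vec4 →ₗ[Poly4] Poly4))))

theorem quarticForm_apply (Λ : Poly4 →ₗ[ℂ] ℂ) (a b c d : Vec4) :
    quarticForm Λ a b c d = ∑ i, ∑ j, ∑ k, ∑ l,
      a i * (b j * (c k * (C (Λ (X i * X j * X k * X l)) * d l))) := by
  simp [quarticForm]

theorem isConstQuartic_quarticForm (Λ : Poly4 →ₗ[ℂ] ℂ) : IsConstQuartic (quarticForm Λ) where
  swap₁ a b c d := by
    rw [quarticForm_apply, quarticForm_apply, Finset.sum_comm]
    refine Finset.sum_congr rfl fun i _ => Finset.sum_congr rfl fun j _ =>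
      Finset.sum_congr rfl fun k _ => Finset.sum_congr rfl fun l _ => ?_
    rw [mul_comm (X j) (X i)]
    ring
  swap₂ a b c d := by
    rw [quarticForm_apply, quarticForm_apply]
    refine Finset.sum_congr rfl fun i _ => ?_
    rw [Finset.sum_comm]
    refine Finset.sum_congr rfl fun j _ =>
      Finset.sum_congr rfl fun k _ => Finset.sum_congr rfl fun l _ => ?_
    rw [mul_right_comm (X i) (X k) (X j)]
    ring
  swap₃ a b c d := by
    rw [quarticForm_apply, quarticForm_apply]
    refine Finset.sum_congr rfl fun i _ => Finset.sum_congr rfl fun j _ => ?_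
    rw [Finset.sum_comm]
    refine Finset.sum_congr rfl fun k _ => Finset.sum_congr rfl fun l _ => ?_
    rw [mul_right_comm (X i * X j) (X l) (X k)]
    ring
  leibniz m a b c d := by
    simp only [quarticForm_apply, map_sum, ← Finset.sum_add_distrib]
    refine Finset.sum_congr rfl fun i _ => Finset.sum_congr rfl fun j _ =>
      Finset.sum_congr rfl fun k _ => Finset.sum_congr rfl fun l _ => ?_
    simp only [vecDeriv, Derivation.leibniz, pderiv_C, smul_eq_mul]
    ring

theorem eval_quarticForm (Λ : Poly4 →ₗ[ℂ] ℂ) (p : Fin 4 → ℂ) (a b c d : Vec4) :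
    eval p (quarticForm Λ a b c d) = Λ (lin (fun i => eval p (a i)) * lin (fun i => eval p (b i)) *
      lin (fun i => eval p (c i)) * lin (fun i => eval p (d i))) := by
  rw [quarticForm_apply]
  have key : ∀ i j k l, C (eval p (a i)) * X i * (C (eval p (b j)) * X j) *
        (C (eval p (c k)) * X k) * (C (eval p (d l)) * X l) =
      (eval p (a i) * (eval p (b j) * (eval p (c k) * eval p (d l)))) •
        (X i * X j * X k * X l : Poly4) := by
    intro i j k l
    rw [smul_eq_C_mul]
    simp only [map_mul]
    ring
  have h : lin (fun i => eval p (a i)) * lin (fun i => eval p (b i)) *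
      lin (fun i => eval p (c i)) * lin (fun i => eval p (d i)) = ∑ i, ∑ j, ∑ k, ∑ l,
        (eval p (a i) * (eval p (b j) * (eval p (c k) * eval p (d l)))) •
        (X i * X j * X k * X l : Poly4) := by
    simp only [← key, lin, ← Finset.mul_sum, ← Finset.sum_mul]
  rw [h]
  simp only [map_sum, map_mul, eval_C, map_smul, smul_eq_mul]
  refine Finset.sum_congr rfl fun i _ => Finset.sum_congr rfl fun j _ =>
    Finset.sum_congr rfl fun k _ => Finset.sum_congr rfl fun l _ => ?_
  ring

/-- Polarization: if the quartic `F(x, x, x, x)` vanishes, so does `F`, as one sees by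
differentiating four times. -/
theorem IsConstQuartic.eq_zero_of_diagonal {F : Form4} (hF : IsConstQuartic F)
    (hX : F (fun i => X i) (fun i => X i) (fun i => X i) (fun i => X i) = 0) (a b c d : Vec4) :
    F a b c d = 0 := by
  set x : Vec4 := fun i => X i with hx
  have dx : ∀ m, vecDeriv m x = Pi.single m 1 := vecDeriv_X
  have s1 := hF.swap₁
  have s2 := hF.swap₂
  have s3 := hF.swap₃
  have hL := hF.leibniz
  have h1 : ∀ a, F a x x x = 0 := by
    intro a
    refine linearMap_eq_zero (((F.flip x).flip x).flip x) (fun m => ?_) a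
    change F (Pi.single m 1) x x x = 0
    have h := hL m x x x x
    rw [hX, map_zero, dx, s3 x x x, s2 x x, s1 x] at h
    have h' : 4 * F (Pi.single m 1) x x x = 0 := by linear_combination -h
    simpa using h'
  have h2 : ∀ a b, F a b x x = 0 := by
    intro a b
    refine linearMap_eq_zero (((F a).flip x).flip x) (fun m => ?_) b
    change F a (Pi.single m 1) x x = 0
    have h := hL m a x x x
    rw [h1, h1, map_zero, dx, s3 a x x, s2 a x] at h
    have h' : 3 * F a (Pi.single m 1) x x = 0 := by linear_combination -h
    simpa using h'
  have h3 : ∀ a b c, F a b c x = 0 := by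
    intro a b c
    refine linearMap_eq_zero ((F a b).flip x) (fun m => ?_) c
    change F a b (Pi.single m 1) x = 0
    have h := hL m a b x x
    rw [h2, h2, h2, map_zero, dx, s3 a b x] at h
    have h' : 2 * F a b (Pi.single m 1) x = 0 := by linear_combination -h
    simpa using h'
  refine linearMap_eq_zero (F a b c) (fun m => ?_) d
  have h := hL m a b c x
  rw [h3, h3, h3, h3, map_zero, dx] at h
  linear_combination -h

end GordanNoether

/-! ### Lefschetz elements -/

section Lefschetz

theorem exists_eval_ne_zero {n : ℕ} {g : MvPolynomial (Fin n) ℂ} (hg : g ≠ 0) :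
    ∃ p, eval p g ≠ 0 := by
  by_contra! h
  exact hg (MvPolynomial.funext fun p => by rw [h p, map_zero])

theorem lin_single (i : Fin 4) : lin (Pi.single i 1) = X i := by
  simp [lin, Pi.single_apply]

theorem lin_isHomogeneous (a : Fin 4 → ℂ) : (lin a).IsHomogeneous 1 :=
  IsHomogeneous.sum _ _ _ fun i _ => by
    simpa using (isHomogeneous_C (Fin 4) (a i)).mul (isHomogeneous_X ℂ i)

theorem lin_injective {a b : Fin 4 → ℂ} (h : lin a = lin b) : a = b := by
  funext i
  have := congrArg (eval (Pi.single i 1)) h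
  simpa [lin, Pi.single_apply] using this

theorem exists_eq_lin {g : Poly4} (hg : g.IsHomogeneous 1) : ∃ a, g = lin a := by
  refine ⟨fun i => coeff (Finsupp.single i 1) g, ?_⟩
  ext m
  by_cases hm : m.degree = 1
  · obtain ⟨i, rfl⟩ := (Finsupp.sum_eq_one_iff m).mp hm
    have h : ∀ k, coeff (Finsupp.single i 1) (X k : Poly4) = if k = i then 1 else 0 := by
      intro k
      rw [coeff_X]
      simp [Finsupp.single_left_inj]
    rw [lin, coeff_sum]
    simp only [coeff_C_mul, h]
    simp
  · rw [hg.coeff_eq_zero hm, (lin_isHomogeneous _).coeff_eq_zero hm]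

theorem eq_zero_of_mem_of_degree_lt {n m e : ℕ} (q : Fin n → MvPolynomial (Fin n) ℂ)
    (hq : ∀ j, (q j).IsHomogeneous m) {g : MvPolynomial (Fin n) ℂ} (hg : g.IsHomogeneous e)
    (he : e < m) (hgJ : g ∈ Ideal.span (Set.range q)) : g = 0 := by
  obtain ⟨h, hh⟩ := (Ideal.mem_span_range_iff_exists_fun).mp hgJ
  rw [← homogeneousComponent_eq_self hg, ← hh, map_sum]
  refine Finset.sum_eq_zero fun j _ => ?_
  rw [← sum_homogeneousComponent (h j), Finset.sum_mul, map_sum]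
  refine Finset.sum_eq_zero fun i _ => ?_
  rw [homogeneousComponent_of_mem (n := i + m)
      ((homogeneousComponent_isHomogeneous i (h j)).mul (hq j)), if_neg (by omega)]

/-- A functional of degree `4` on the polynomial ring that identifies `R / J` with its dual. -/
structure IsSocleFunctional (J : Ideal Poly4) (Λ : Poly4 →ₗ[ℂ] ℂ) : Prop where
  map_mem : ∀ g ∈ J, Λ g = 0
  nondeg : ∀ g, (∀ h, Λ (g * h) = 0) → g ∈ J
  map_degree : ∀ d g, g.IsHomogeneous d → d ≠ 4 → Λ g = 0

namespace IsSocleFunctional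

variable {J : Ideal Poly4} {Λ : Poly4 →ₗ[ℂ] ℂ}

theorem mem_of_degree_four (hΛ : IsSocleFunctional J Λ) {g : Poly4} (hg : g.IsHomogeneous 4)
    (h0 : Λ g = 0) : g ∈ J := by
  refine hΛ.nondeg g fun h => ?_
  rw [← sum_homogeneousComponent h, Finset.mul_sum, map_sum]
  refine Finset.sum_eq_zero fun c _ => ?_
  by_cases hc : c = 0
  · subst hc
    rw [homogeneousComponent_zero, mul_comm, ← smul_eq_C_mul, map_smul, h0, smul_zero]
  · exact hΛ.map_degree _ _ (hg.mul (homogeneousComponent_isHomogeneous c h)) (by omega)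

theorem mem_of_X_mul_mem (hΛ : IsSocleFunctional J Λ) {d : ℕ} {g : Poly4} (hg : g.IsHomogeneous d)
    (hd : d ≠ 4) (h : ∀ i, g * X i ∈ J) : g ∈ J := by
  refine hΛ.nondeg g fun p => ?_
  induction p using MvPolynomial.induction_on with
  | C a => rw [mul_comm, ← smul_eq_C_mul, map_smul, hΛ.map_degree d g hg hd, smul_zero]
  | add p q hp hq => rw [mul_add, map_add, hp, hq, add_zero]
  | mul_X p i _ =>
    rw [mul_comm p, ← mul_assoc]
    exact hΛ.map_mem _ (Ideal.mul_mem_right _ _ (h i))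

theorem mem_of_degree_three (hΛ : IsSocleFunctional J Λ) {g : Poly4} (hg : g.IsHomogeneous 3)
    (h : ∀ i, Λ (g * X i) = 0) : g ∈ J :=
  hΛ.mem_of_X_mul_mem hg (by norm_num) fun i =>
    hΛ.mem_of_degree_four (hg.mul (isHomogeneous_X ℂ i)) (h i)

theorem mem_of_degree_two (hΛ : IsSocleFunctional J Λ) {g : Poly4} (hg : g.IsHomogeneous 2)
    (h : ∀ i j, Λ (g * X i * X j) = 0) : g ∈ J :=
  hΛ.mem_of_X_mul_mem hg (by norm_num) fun i =>
    hΛ.mem_of_degree_three (hg.mul (isHomogeneous_X ℂ i)) (h i)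

theorem mem_of_degree_one (hΛ : IsSocleFunctional J Λ) {g : Poly4} (hg : g.IsHomogeneous 1)
    (h : ∀ i j k, Λ (g * X i * X j * X k) = 0) : g ∈ J :=
  hΛ.mem_of_X_mul_mem hg (by norm_num) fun i =>
    hΛ.mem_of_degree_two (hg.mul (isHomogeneous_X ℂ i)) (h i)

end IsSocleFunctional

/-- Up to a constant factor, the Hessian matrix of the quartic `p ↦ Λ(ℓ_p ^ 4)`. -/
noncomputable def genericHessian (Λ : Poly4 →ₗ[ℂ] ℂ) : Matrix (Fin 4) (Fin 4) Poly4 :=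
  Matrix.of fun i j =>
    quarticForm Λ (fun i => X i) (fun i => X i) (Pi.single i 1) (Pi.single j 1)

theorem eval_single (p : Fin 4 → ℂ) (i : Fin 4) :
    (fun k => eval p ((Pi.single i 1 : Vec4) k)) = Pi.single i 1 := by
  funext k
  by_cases h : k = i
  · subst h; simp
  · simp [h]

theorem quarticForm_diagonal_ne_zero {J : Ideal Poly4} {Λ : Poly4 →ₗ[ℂ] ℂ}
    (hΛ : IsSocleFunctional J Λ) (hJ : (1 : Poly4) ∉ J) :
    quarticForm Λ (fun i => X i) (fun i => X i) (fun i => X i) (fun i => X i) ≠ 0 := by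
  intro h0
  have h := (isConstQuartic_quarticForm Λ).eq_zero_of_diagonal h0
  apply hJ
  refine hΛ.mem_of_X_mul_mem (isHomogeneous_one _ _) (by norm_num) fun i => ?_
  rw [one_mul]
  refine hΛ.mem_of_degree_one (isHomogeneous_X ℂ i) fun j k l => ?_
  have h1 := eval_quarticForm Λ 0 (Pi.single i 1) (Pi.single j 1) (Pi.single k 1) (Pi.single l 1)
  rw [h, map_zero] at h1
  simp only [eval_single, lin_single] at h1
  exact h1.symm

/-- The quartic dual to `J` has nonvanishing Hessian. Otherwise either a nonzero linear form lies in
`J`, which is generated in degree `2`, or there are independent linear forms `α`, `γ` with `α²` and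
`α γ` in `J`. In the latter case `α² = ∑ u_j q_j` and `α γ = ∑ v_j q_j` with constants `u`, `v`, and
`γ u - α v` is a syzygy; its coefficients are linear forms in `J`, so they vanish and `u = 0`. -/
theorem genericHessian_det_ne_zero (q : Fin 4 → Poly4) (hq : ∀ j, (q j).IsHomogeneous 2)
    {Λ : Poly4 →ₗ[ℂ] ℂ} (hΛ : IsSocleFunctional (Ideal.span (Set.range q)) Λ)
    (hsyz : ∀ s : Fin 4 → Poly4, ∑ j, s j * q j = 0 → ∀ j, s j ∈ Ideal.span (Set.range q))
    (hdiag : quarticForm Λ (fun i => X i) (fun i => X i) (fun i => X i) (fun i => X i) ≠ 0) :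
    (genericHessian Λ).det ≠ 0 := by
  intro hdet
  obtain ⟨ψ, hψ0, hψ⟩ := Matrix.exists_mulVec_eq_zero_iff.mpr hdet
  have hF := isConstQuartic_quarticForm Λ
  have hlin : ∀ b : Fin 4 → ℂ, lin b ∈ Ideal.span (Set.range q) → b = 0 := by
    intro b hb
    apply lin_injective
    rw [eq_zero_of_mem_of_degree_lt q hq (lin_isHomogeneous b) (by norm_num) hb]
    simp [lin]
  have hker : ∀ v, quarticForm Λ (fun i => X i) (fun i => X i) ψ v = 0 := by
    refine linearMap_eq_zero (quarticForm Λ (fun i => X i) (fun i => X i) ψ) fun i => ?_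
    rw [hF.swap₃, linearMap_apply_eq_sum (quarticForm Λ _ _ _) ψ]
    refine Eq.trans ?_ (congrFun hψ i)
    simp [Matrix.mulVec, dotProduct, genericHessian, mul_comm]
  rcases hF.kernel_dichotomy hdiag ψ hψ0 hker with ⟨a, ha, h⟩ | ⟨a, b, ⟨i, j, hij⟩, haa, hab⟩
  · obtain ⟨i, hi⟩ := Function.ne_iff.mp ha
    obtain ⟨p, hp⟩ := exists_eval_ne_zero hi
    have h1 := hlin (fun i => eval p (a i)) (hΛ.mem_of_degree_one (lin_isHomogeneous _)
      fun j k l => by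
        have h1 := eval_quarticForm Λ p a (Pi.single j 1) (Pi.single k 1) (Pi.single l 1)
        rw [h, map_zero] at h1
        simp only [eval_single, lin_single] at h1
        exact h1.symm)
    exact hp (congrFun h1 i)
  · obtain ⟨p, hp⟩ := exists_eval_ne_zero hij
    have hmem : ∀ c : Vec4, (∀ v w, quarticForm Λ a c v w = 0) →
        lin (fun i => eval p (a i)) * lin (fun i => eval p (c i)) ∈ Ideal.span (Set.range q) := by
      intro c hc
      refine hΛ.mem_of_degree_two ((lin_isHomogeneous _).mul (lin_isHomogeneous _)) fun k l => ?_
      have h1 := eval_quarticForm Λ p a c (Pi.single k 1) (Pi.single l 1)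
      rw [hc, map_zero] at h1
      simp only [eval_single, lin_single] at h1
      exact h1.symm
    have hrep : ∀ c : Vec4, (∀ v w, quarticForm Λ a c v w = 0) → ∃ u : Fin 4 → ℂ,
        lin (fun i => eval p (a i)) * lin (fun i => eval p (c i)) = ∑ j, C (u j) * q j := by
      intro c hc
      obtain ⟨u, hu, h⟩ := exists_homogeneous_coeffs (d := 0) q hq
        ((lin_isHomogeneous _).mul (lin_isHomogeneous _)) (hmem c hc)
      refine ⟨fun j => coeff 0 (u j), h.trans (Finset.sum_congr rfl fun j _ => ?_)⟩
      rw [← homogeneousComponent_zero, homogeneousComponent_eq_self (hu j)]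
    obtain ⟨u, hu⟩ := hrep a haa
    obtain ⟨v, hv⟩ := hrep b hab
    set α : Fin 4 → ℂ := fun i => eval p (a i) with hα
    set γ : Fin 4 → ℂ := fun i => eval p (b i) with hγ
    have hαγ : α i * γ j - α j * γ i ≠ 0 := by simpa [hα, hγ] using hp
    have hs : ∀ k, lin (fun l => u k * γ l - v k * α l) ∈ Ideal.span (Set.range q) := by
      have hform : ∀ k, lin (fun l => u k * γ l - v k * α l) =
          lin γ * C (u k) - lin α * C (v k) := by
        intro k
        simp only [lin, Finset.sum_mul, ← Finset.sum_sub_distrib]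
        refine Finset.sum_congr rfl fun l _ => ?_
        simp only [map_sub, map_mul]
        ring
      refine hsyz _ ?_
      simp only [hform, sub_mul, mul_assoc, Finset.sum_sub_distrib, ← Finset.mul_sum]
      rw [← hu, ← hv]
      ring
    have hu0 : ∀ k, u k = 0 := by
      intro k
      have h1 := hlin _ (hs k)
      have hi := congrFun h1 i
      have hj := congrFun h1 j
      simp only [Pi.zero_apply] at hi hj
      have : u k * (α i * γ j - α j * γ i) = 0 := by linear_combination α i * hj - α j * hi
      exact (mul_eq_zero.mp this).resolve_right hαγ
    have h1 : lin α * lin α = 0 := by rw [hu]; simp [hu0]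
    have h2 : α = 0 := hlin α (by rw [mul_self_eq_zero.mp h1]; exact Ideal.zero_mem _)
    exact hαγ (by simp [h2])

theorem mem_gradedPiece {N : ℕ} {I : Ideal (MvPolynomial (Fin N) ℂ)} {m : ℕ}
    {v : MvPolynomial (Fin N) ℂ ⧸ I} :
    v ∈ gradedPiece I m ↔ ∃ g : MvPolynomial (Fin N) ℂ, g.IsHomogeneous m ∧
      Ideal.Quotient.mk I g = v := by
  simp [gradedPiece, Submodule.mem_map, mem_homogeneousSubmodule]

theorem hasSLPQuot_of_quadrics (q : Fin 4 → Poly4) (hq : ∀ j, (q j).IsHomogeneous 2)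
    (hsm : ∀ x : Fin 4 → ℂ, x ≠ 0 → ∃ i, eval x (q i) ≠ 0) :
    hasSLPQuot (Ideal.span (Set.range q)) 4 := by
  obtain ⟨⟨Λ, h1, h2, h3⟩, hsyz⟩ := exists_dual_socle_generator q hq hsm
  have hΛ : IsSocleFunctional (Ideal.span (Set.range q)) Λ := ⟨h1, h2, h3⟩
  have hone : (1 : Poly4) ∉ Ideal.span (Set.range q) := fun h =>
    one_ne_zero (eq_zero_of_mem_of_degree_lt q hq (isHomogeneous_one _ _) (by norm_num) h)
  have hdiag := quarticForm_diagonal_ne_zero hΛ hone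
  have hdet := genericHessian_det_ne_zero q hq hΛ hsyz hdiag
  obtain ⟨a, ha⟩ := exists_eval_ne_zero (mul_ne_zero hdiag hdet)
  rw [map_mul] at ha
  set J := Ideal.span (Set.range q) with hJ
  have hX : (fun i => eval a ((fun i => X i : Vec4) i)) = a := by funext i; simp
  have hℓ4 : Λ (lin a ^ 4) ≠ 0 := by
    have h := left_ne_zero_of_mul ha
    rw [eval_quarticForm, hX] at h
    rwa [show lin a ^ 4 = lin a * lin a * lin a * lin a by ring]
  set H : Matrix (Fin 4) (Fin 4) ℂ := (genericHessian Λ).map (eval a) with hH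
  have hHdet : H.det ≠ 0 := by
    have h := right_ne_zero_of_mul ha
    rwa [RingHom.map_det] at h
  have hHapp : ∀ b i, H.mulVec b i = Λ (lin a ^ 2 * lin b * X i) := by
    intro b i
    have e1 : ∀ k, H i k = Λ (lin a * lin a * X i * X k) := by
      intro k
      have h := eval_quarticForm Λ a (fun i => X i) (fun i => X i) (Pi.single i 1) (Pi.single k 1)
      rw [hX, eval_single, eval_single, lin_single, lin_single] at h
      exact h
    have e2 : lin a ^ 2 * lin b * X i = ∑ k, b k • (lin a * lin a * X i * X k) := by
      rw [show lin a ^ 2 * lin b * X i = lin a * lin a * X i * lin b by ring]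
      conv_lhs => rw [lin.eq_def b]
      rw [Finset.mul_sum]
      refine Finset.sum_congr rfl fun k _ => ?_
      rw [smul_eq_C_mul]
      ring
    rw [e2, map_sum]
    simp [Matrix.mulVec, dotProduct, e1, mul_comm]
  have hmk : ∀ k g, (Ideal.Quotient.mk J (lin a)) ^ k * Ideal.Quotient.mk J g =
      Ideal.Quotient.mk J (lin a ^ k * g) := by
    intro k g
    rw [map_mul, map_pow]
  refine ⟨lin a, lin_isHomogeneous a, fun i k hik => ?_⟩
  -- Below, an element of `J` is multiplied by a further power of `lin a` to reach the pairing
  -- in degree `4`.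
  have inj0 : ∀ k, k ≤ 4 → ∀ v ∈ gradedPiece J 0, (Ideal.Quotient.mk J (lin a)) ^ k * v = 0 →
      v = 0 := by
    intro k hk v hv hv0
    obtain ⟨g, hg, rfl⟩ := mem_gradedPiece.mp hv
    rw [hmk, Ideal.Quotient.eq_zero_iff_mem] at hv0
    have hg' : g = C (coeff 0 g) := by
      rw [← homogeneousComponent_zero, homogeneousComponent_eq_self hg]
    have h4 : Λ (lin a ^ (4 - k) * (lin a ^ k * g)) = 0 :=
      hΛ.map_mem _ (Ideal.mul_mem_left _ _ hv0)
    rw [← mul_assoc, ← pow_add, Nat.sub_add_cancel hk, hg', mul_comm, ← smul_eq_C_mul, map_smul,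
      smul_eq_mul] at h4
    rw [hg', (mul_eq_zero.mp h4).resolve_right hℓ4, map_zero, map_zero]
  have inj1 : ∀ k, k ≤ 2 → ∀ v ∈ gradedPiece J 1, (Ideal.Quotient.mk J (lin a)) ^ k * v = 0 →
      v = 0 := by
    intro k hk v hv hv0
    obtain ⟨g, hg, rfl⟩ := mem_gradedPiece.mp hv
    rw [hmk, Ideal.Quotient.eq_zero_iff_mem] at hv0
    obtain ⟨b, rfl⟩ := exists_eq_lin hg
    have hb : b = 0 := by
      refine Matrix.eq_zero_of_mulVec_eq_zero hHdet (funext fun i => ?_)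
      rw [hHapp]
      refine hΛ.map_mem _ (Ideal.mul_mem_right _ _ ?_)
      have := Ideal.mul_mem_left J (lin a ^ (2 - k)) hv0
      rwa [← mul_assoc, ← pow_add, Nat.sub_add_cancel hk] at this
    rw [hb, show lin 0 = 0 by simp [lin], map_zero]
  have surj4 : ∀ i k, i + k = 4 → ∀ w ∈ gradedPiece J (i + k), ∃ v ∈ gradedPiece J i,
      (Ideal.Quotient.mk J (lin a)) ^ k * v = w := by
    intro i k hik w hw
    obtain ⟨g, hg, rfl⟩ := mem_gradedPiece.mp hw
    rw [hik] at hg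
    set c := Λ g / Λ (lin a ^ 4) with hc
    refine ⟨Ideal.Quotient.mk J (C c * lin a ^ i), mem_gradedPiece.mpr ⟨_, ?_, rfl⟩, ?_⟩
    · simpa using (isHomogeneous_C _ c).mul ((lin_isHomogeneous a).pow i)
    · rw [hmk, Ideal.Quotient.eq]
      have e : lin a ^ k * (C c * lin a ^ i) = c • lin a ^ 4 := by
        rw [smul_eq_C_mul, mul_left_comm, ← pow_add, add_comm k i, hik]
      rw [e]
      refine hΛ.mem_of_degree_four (IsHomogeneous.sub ?_ hg) ?_
      · rw [smul_eq_C_mul]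
        simpa using (isHomogeneous_C _ c).mul ((lin_isHomogeneous a).pow 4)
      · rw [map_sub, map_smul, smul_eq_mul, hc, div_mul_cancel₀ _ hℓ4, sub_self]
  have surj21 : ∀ w ∈ gradedPiece J (2 + 1), ∃ v ∈ gradedPiece J 2,
      (Ideal.Quotient.mk J (lin a)) ^ 1 * v = w := by
    intro w hw
    obtain ⟨g, hg, rfl⟩ := mem_gradedPiece.mp hw
    set b := H⁻¹.mulVec fun i => Λ (g * X i) with hb
    have hHb : ∀ i, Λ (lin a ^ 2 * lin b * X i) = Λ (g * X i) := by
      intro i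
      rw [← hHapp, hb, Matrix.mulVec_mulVec, Matrix.mul_nonsing_inv _ (isUnit_iff_ne_zero.mpr hHdet),
        Matrix.one_mulVec]
    refine ⟨Ideal.Quotient.mk J (lin a * lin b), mem_gradedPiece.mpr ⟨_, ?_, rfl⟩, ?_⟩
    · exact (lin_isHomogeneous a).mul (lin_isHomogeneous b)
    · rw [hmk, Ideal.Quotient.eq, show lin a ^ 1 * (lin a * lin b) = lin a ^ 2 * lin b by ring]
      refine hΛ.mem_of_degree_three (IsHomogeneous.sub ?_ hg) fun i => ?_
      · simpa using ((lin_isHomogeneous a).pow 2).mul (lin_isHomogeneous b)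
      · rw [sub_mul, map_sub, hHb, sub_self]
  by_cases hk0 : k = 0
  · subst hk0
    exact Or.inl fun v _ hv => by simpa using hv
  by_cases hi0 : i = 0
  · subst hi0
    exact Or.inl (inj0 k (by omega))
  by_cases hik4 : i + k = 4
  · exact Or.inr (surj4 i k hik4)
  by_cases hi1 : i = 1
  · subst hi1
    exact Or.inl (inj1 k (by omega))
  obtain rfl : i = 2 := by omega
  obtain rfl : k = 1 := by omega
  exact Or.inr surj21

end Lefschetz

/-- **Proposition.** For any smooth cubic surface `V(f) ⊂ ℙ^3`, the Milnor algebra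
`M(f) = R/J(f)` (an Artinian Gorenstein algebra of socle degree `(3+1)(3-2) = 4`)
has the Strong Lefschetz Property. -/
theorem milnor_algebra_smooth_cubic_surface_SLP
    (f : MvPolynomial (Fin 4) ℂ) (hf : f.IsHomogeneous 3)
    (hsm : ∀ x : Fin 4 → ℂ, x ≠ 0 → ∃ i : Fin 4, eval x (pderiv i f) ≠ 0) :
    hasSLPQuot (jacobianIdeal f) 4 :=
  hasSLPQuot_of_quadrics (fun i => pderiv i f) (fun _ => hf.pderiv) hsm
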